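/- Let y be a quasi shell solution. Then y(r) = y(0), γ(r) < 0 for 0 < r < R₀, γ(R₀) = 0, and ϱ(r) = p(r) = 0 and m(r) = 0 for all r ∈ (0, R₀]; that is, the region r ≤ R₀ = √L₀ e^{−y(0)} is an inner vacuum region. -/

import Mathlib

open MeasureTheory Real Set Filter

/-- The constant `c_ℓ = 2π ∫₀¹ s^ℓ (1-s)^{-1/2} ds`. -/
noncomputable def cConst (ℓ : ℝ) : ℝ :=
  2 * π * ∫ s in Set.Ioc (0 : ℝ) 1, s ^ ℓ / Real.sqrt (1 - s)

/-- Energy density of the massless Einstein--Vlasov ansatz. -/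
noncomputable def rho (k ℓ L0 : ℝ) (y : ℝ → ℝ) (r : ℝ) : ℝ :=
  cConst ℓ * r ^ (2 * ℓ) *
    ∫ ε in Set.Ioc (Real.sqrt L0 / r) (Real.exp (y r)),
      (1 - ε * Real.exp (-(y r))) ^ k * ε ^ 2 * (ε ^ 2 - L0 / r ^ 2) ^ (ℓ + 1 / 2)

/-- Radial pressure of the massless Einstein--Vlasov ansatz. -/
noncomputable def pres (k ℓ L0 : ℝ) (y : ℝ → ℝ) (r : ℝ) : ℝ :=
  (cConst ℓ / (2 * ℓ + 3)) * r ^ (2 * ℓ) *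
    ∫ ε in Set.Ioc (Real.sqrt L0 / r) (Real.exp (y r)),
      (1 - ε * Real.exp (-(y r))) ^ k * (ε ^ 2 - L0 / r ^ 2) ^ (ℓ + 3 / 2)

/-- The Hawking mass `m(r) = 4π ∫₀ʳ s² ϱ(s) ds`. -/
noncomputable def hawkingMass (k ℓ L0 : ℝ) (y : ℝ → ℝ) (r : ℝ) : ℝ :=
  4 * π * ∫ s in Set.Ioc (0 : ℝ) r, s ^ 2 * rho k ℓ L0 y s

/-- The characteristic function `γ(r) = y(r) - (1/2) ln (L₀ / r²)`. -/
noncomputable def charFn (L0 : ℝ) (y : ℝ → ℝ) (r : ℝ) : ℝ :=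
  y r - (1 / 2) * Real.log (L0 / r ^ 2)

/-- The inner radius `R₀ = √L₀ e^{-y(0)}`. -/
noncomputable def innerRadius (L0 : ℝ) (y : ℝ → ℝ) : ℝ :=
  Real.sqrt L0 * Real.exp (-(y 0))

/-- A quasi shell solution of the massless Einstein--Vlasov system. -/
def QuasiShell (k ℓ L0 : ℝ) (y : ℝ → ℝ) : Prop :=
  ContDiffOn ℝ 1 y (Set.Ici 0) ∧
  ∀ r > 0, 2 * hawkingMass k ℓ L0 y r / r < 1 ∧
    HasDerivAt y
      (-(1 - 2 * hawkingMass k ℓ L0 y r / r)⁻¹ *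
        (4 * π * r * pres k ℓ L0 y r + hawkingMass k ℓ L0 y r / r ^ 2)) r

/-!
Nonnegative density and pressure make `y` nonincreasing, so `γ(r) = y(r) - y(0) + ln (r / R₀)` is
nonpositive for `r ≤ R₀`. Matter vanishes wherever `γ ≤ 0`, hence there is none on `(0, R₀]`, the
mass vanishes there too, and the field equation reduces to `y' = 0`. Thus `y = y(0)` and
`γ(r) = ln (r / R₀)` on `(0, R₀]`.
-/

section CharFn

variable {L0 r : ℝ} {y : ℝ → ℝ}

lemma charFn_eq_sub_log (hL : 0 ≤ L0) (hr : 0 < r) : charFn L0 y r = y r - log (√L0 / r) := by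
  rw [charFn, ← sqrt_sq hr.le, ← sqrt_div hL, log_sqrt (by positivity), sqrt_sq hr.le]
  ring

lemma charFn_nonpos_iff_exp_le (hL : 0 < L0) (hr : 0 < r) :
    charFn L0 y r ≤ 0 ↔ exp (y r) ≤ √L0 / r := by
  rw [charFn_eq_sub_log hL.le hr, sub_nonpos, le_log_iff_exp_le (by positivity)]

lemma innerRadius_pos (hL : 0 < L0) : 0 < innerRadius L0 y := by
  unfold innerRadius
  positivity

lemma charFn_eq_sub_add_log_div_innerRadius (hL : 0 < L0) (hr : 0 < r) :
    charFn L0 y r = y r - y 0 + log (r / innerRadius L0 y) := by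
  have hs : √L0 ≠ 0 := (sqrt_pos.mpr hL).ne'
  rw [charFn_eq_sub_log hL.le hr, log_div hs hr.ne', log_div hr.ne' (innerRadius_pos hL).ne',
    innerRadius, log_mul hs (exp_ne_zero _), log_exp]
  ring

end CharFn

section Ansatz

variable {k ℓ L0 r : ℝ} {y : ℝ → ℝ}

lemma cConst_nonneg : 0 ≤ cConst ℓ :=
  mul_nonneg two_pi_pos.le <| setIntegral_nonneg measurableSet_Ioc fun _ hs =>
    div_nonneg (rpow_nonneg hs.1.le _) (sqrt_nonneg _)

lemma one_sub_mul_exp_neg_nonneg {ε t : ℝ} (h : ε ≤ exp t) : 0 ≤ 1 - ε * exp (-t) := by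
  rw [sub_nonneg, exp_neg, ← div_eq_mul_inv]
  exact div_le_one_of_le₀ h (exp_pos t).le

lemma sq_sub_div_sq_nonneg {ε : ℝ} (hr : 0 ≤ r) (h : √L0 / r ≤ ε) : 0 ≤ ε ^ 2 - L0 / r ^ 2 := by
  have hsqrt : √(L0 / r ^ 2) ≤ ε := by rwa [sqrt_div' _ (sq_nonneg r), sqrt_sq hr]
  exact sub_nonneg.mpr (sqrt_le_iff.mp hsqrt).2

lemma rho_nonneg (hr : 0 ≤ r) : 0 ≤ rho k ℓ L0 y r := by
  refine mul_nonneg (mul_nonneg cConst_nonneg (rpow_nonneg hr _))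
    (setIntegral_nonneg measurableSet_Ioc fun ε hε => ?_)
  have hk := rpow_nonneg (one_sub_mul_exp_neg_nonneg hε.2) k
  have hl := rpow_nonneg (sq_sub_div_sq_nonneg hr hε.1.le) (ℓ + 1 / 2)
  positivity

lemma pres_nonneg (hl : -(3 / 2) < ℓ) (hr : 0 ≤ r) : 0 ≤ pres k ℓ L0 y r := by
  refine mul_nonneg (mul_nonneg (div_nonneg cConst_nonneg (by linarith)) (rpow_nonneg hr _))
    (setIntegral_nonneg measurableSet_Ioc fun ε hε => ?_)
  exact mul_nonneg (rpow_nonneg (one_sub_mul_exp_neg_nonneg hε.2) _)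
    (rpow_nonneg (sq_sub_div_sq_nonneg hr hε.1.le) _)

lemma rho_eq_zero_of_exp_le (h : exp (y r) ≤ √L0 / r) : rho k ℓ L0 y r = 0 := by
  simp [rho, Ioc_eq_empty_of_le h]

lemma pres_eq_zero_of_exp_le (h : exp (y r) ≤ √L0 / r) : pres k ℓ L0 y r = 0 := by
  simp [pres, Ioc_eq_empty_of_le h]

end Ansatz

/-- The mass `m(r) = 4π ∫₀ʳ s² ρ(s) ds` within radius `r` of an arbitrary energy density `ρ`;
`hawkingMass` is the case `ρ = rho k ℓ L0 y`. The integral is `0` if `s² ρ(s)` is not integrable. -/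
noncomputable def massOfDensity (ρ : ℝ → ℝ) (r : ℝ) : ℝ :=
  4 * π * ∫ s in Ioc (0 : ℝ) r, s ^ 2 * ρ s

lemma massOfDensity_nonneg {ρ : ℝ → ℝ} {r : ℝ} (hρ : ∀ s ∈ Ioc 0 r, 0 ≤ ρ s) :
    0 ≤ massOfDensity ρ r :=
  mul_nonneg (by positivity) <| setIntegral_nonneg measurableSet_Ioc fun s hs =>
    mul_nonneg (sq_nonneg s) (hρ s hs)

lemma massOfDensity_eq_zero {ρ : ℝ → ℝ} {r : ℝ} (hρ : ∀ s ∈ Ioc 0 r, ρ s = 0) :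
    massOfDensity ρ r = 0 := by
  rw [massOfDensity, setIntegral_eq_zero_of_forall_eq_zero fun s hs => by rw [hρ s hs, mul_zero],
    mul_zero]

/-- A static, spherically symmetric solution `y`, continuous up to the center, of the field equation
of `QuasiShell` for an arbitrary matter model: its density `ρ` and radial pressure `p` are
nonnegative and vanish wherever the characteristic function is nonpositive. -/
structure IsCutoffSolution (L0 : ℝ) (ρ p y : ℝ → ℝ) : Prop where
  continuousOn : ContinuousOn y (Ici 0)
  density_nonneg : ∀ r > 0, 0 ≤ ρ r
  pressure_nonneg : ∀ r > 0, 0 ≤ p r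
  density_eq_zero : ∀ r > 0, charFn L0 y r ≤ 0 → ρ r = 0
  pressure_eq_zero : ∀ r > 0, charFn L0 y r ≤ 0 → p r = 0
  two_mul_mass_div_lt_one : ∀ r > 0, 2 * massOfDensity ρ r / r < 1
  hasDerivAt : ∀ r > 0, HasDerivAt y
    (-(1 - 2 * massOfDensity ρ r / r)⁻¹ * (4 * π * r * p r + massOfDensity ρ r / r ^ 2)) r

lemma QuasiShell.isCutoffSolution {k ℓ L0 : ℝ} {y : ℝ → ℝ} (hy : QuasiShell k ℓ L0 y)
    (hl : -(3 / 2) < ℓ) (hL : 0 < L0) :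
    IsCutoffSolution L0 (rho k ℓ L0 y) (pres k ℓ L0 y) y where
  continuousOn := hy.1.continuousOn
  density_nonneg _ hr := rho_nonneg hr.le
  pressure_nonneg _ hr := pres_nonneg hl hr.le
  density_eq_zero _ hr hγ := rho_eq_zero_of_exp_le ((charFn_nonpos_iff_exp_le hL hr).mp hγ)
  pressure_eq_zero _ hr hγ := pres_eq_zero_of_exp_le ((charFn_nonpos_iff_exp_le hL hr).mp hγ)
  two_mul_mass_div_lt_one r hr := (hy.2 r hr).1
  hasDerivAt r hr := (hy.2 r hr).2

namespace IsCutoffSolution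

variable {L0 r : ℝ} {ρ p y : ℝ → ℝ}

lemma deriv_nonpos (h : IsCutoffSolution L0 ρ p y) (hr : 0 < r) : deriv y r ≤ 0 := by
  have hm : 0 ≤ massOfDensity ρ r :=
    massOfDensity_nonneg fun s hs => h.density_nonneg s hs.1
  have hp := h.pressure_nonneg r hr
  have hmetric : 0 ≤ (1 - 2 * massOfDensity ρ r / r)⁻¹ :=
    inv_nonneg.mpr (sub_nonneg.mpr (h.two_mul_mass_div_lt_one r hr).le)
  rw [(h.hasDerivAt r hr).deriv, neg_mul, neg_nonpos]
  positivity

lemma antitoneOn (h : IsCutoffSolution L0 ρ p y) : AntitoneOn y (Ici 0) := by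
  refine antitoneOn_of_deriv_nonpos (convex_Ici 0) h.continuousOn (fun r hr => ?_) fun r hr => ?_
  · rw [interior_Ici] at hr
    exact (h.hasDerivAt r hr).differentiableAt.differentiableWithinAt
  · rw [interior_Ici] at hr
    exact h.deriv_nonpos hr

lemma charFn_nonpos (h : IsCutoffSolution L0 ρ p y) (hL : 0 < L0)
    (hr : r ∈ Ioc 0 (innerRadius L0 y)) : charFn L0 y r ≤ 0 := by
  have hy : y r ≤ y 0 := h.antitoneOn self_mem_Ici hr.1.le hr.1.le
  have hlog : log (r / innerRadius L0 y) ≤ 0 :=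
    log_nonpos (div_pos hr.1 (innerRadius_pos hL)).le
      (div_le_one_of_le₀ hr.2 (innerRadius_pos hL).le)
  rw [charFn_eq_sub_add_log_div_innerRadius hL hr.1]
  linarith

lemma vacuum_of_mem_Ioc (h : IsCutoffSolution L0 ρ p y) (hL : 0 < L0)
    (hr : r ∈ Ioc 0 (innerRadius L0 y)) : ρ r = 0 ∧ p r = 0 ∧ massOfDensity ρ r = 0 := by
  refine ⟨h.density_eq_zero r hr.1 (h.charFn_nonpos hL hr),
    h.pressure_eq_zero r hr.1 (h.charFn_nonpos hL hr), massOfDensity_eq_zero fun s hs => ?_⟩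
  exact h.density_eq_zero s hs.1 (h.charFn_nonpos hL ⟨hs.1, hs.2.trans hr.2⟩)

lemma hasDerivAt_zero (h : IsCutoffSolution L0 ρ p y) (hL : 0 < L0)
    (hr : r ∈ Ioc 0 (innerRadius L0 y)) : HasDerivAt y 0 r := by
  obtain ⟨-, hp, hm⟩ := h.vacuum_of_mem_Ioc hL hr
  simpa [hp, hm] using h.hasDerivAt r hr.1

lemma eq_apply_zero (h : IsCutoffSolution L0 ρ p y) (hL : 0 < L0)
    (hr : r ∈ Icc 0 (innerRadius L0 y)) : y r = y 0 := by
  rcases hr.1.eq_or_lt with rfl | hr0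
  · rfl
  · obtain ⟨-, -, hslope⟩ := exists_hasDerivAt_eq_slope y (fun _ => 0) hr0
      (h.continuousOn.mono Icc_subset_Ici_self)
      fun s hs => h.hasDerivAt_zero hL ⟨hs.1, hs.2.le.trans hr.2⟩
    rw [eq_div_iff (sub_pos.mpr hr0).ne', zero_mul] at hslope
    exact sub_eq_zero.mp hslope.symm

lemma charFn_eq_log_div (h : IsCutoffSolution L0 ρ p y) (hL : 0 < L0)
    (hr : r ∈ Ioc 0 (innerRadius L0 y)) : charFn L0 y r = log (r / innerRadius L0 y) := by
  rw [charFn_eq_sub_add_log_div_innerRadius hL hr.1, h.eq_apply_zero hL (Ioc_subset_Icc_self hr),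
    sub_self, zero_add]

end IsCutoffSolution

theorem inner_vacuum_region_general {L0 : ℝ} {ρ p y : ℝ → ℝ} (hL : 0 < L0)
    (h : IsCutoffSolution L0 ρ p y) :
    (∀ r, 0 ≤ r → r ≤ innerRadius L0 y → y r = y 0) ∧
    (∀ r, 0 < r → r < innerRadius L0 y → charFn L0 y r < 0) ∧
    charFn L0 y (innerRadius L0 y) = 0 ∧
    ∀ r, 0 < r → r ≤ innerRadius L0 y → ρ r = 0 ∧ p r = 0 ∧ massOfDensity ρ r = 0 := by
  have hR : 0 < innerRadius L0 y := innerRadius_pos hL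
  refine ⟨fun r hr hrR => h.eq_apply_zero hL ⟨hr, hrR⟩, fun r hr hrR => ?_, ?_,
    fun r hr hrR => h.vacuum_of_mem_Ioc hL ⟨hr, hrR⟩⟩
  · rw [h.charFn_eq_log_div hL ⟨hr, hrR.le⟩]
    exact log_neg (div_pos hr hR) ((div_lt_one hR).mpr hrR)
  · rw [h.charFn_eq_log_div hL ⟨hR, le_rfl⟩, div_self hR.ne', log_one]

/-- The region `r ≤ R₀ = √L₀ e^{-y(0)}` is an inner vacuum region:
`y ≡ y(0)`, `γ < 0` on `(0,R₀)`, `γ(R₀) = 0`, and `ϱ = p = m = 0` on `(0,R₀]`. -/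
theorem inner_vacuum_region (k ℓ L0 : ℝ) (hk : 0 ≤ k) (hl : -(1 / 2) ≤ ℓ) (hL : 0 < L0)
    (y : ℝ → ℝ) (hy : QuasiShell k ℓ L0 y) :
    (∀ r, 0 ≤ r → r ≤ innerRadius L0 y → y r = y 0) ∧
    (∀ r, 0 < r → r < innerRadius L0 y → charFn L0 y r < 0) ∧
    charFn L0 y (innerRadius L0 y) = 0 ∧
    ∀ r, 0 < r → r ≤ innerRadius L0 y →
      rho k ℓ L0 y r = 0 ∧ pres k ℓ L0 y r = 0 ∧ hawkingMass k ℓ L0 y r = 0 :=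
  inner_vacuum_region_general hL (hy.isCutoffSolution (by linarith) hL)
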